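/- Let n ∈ ℕ and let f : ℂ× → M_n(ℂ) be holomorphic with f(z) invertible for every z ∈ ℂ× (where ℂ× = ℂ \ {0}). Then there exist integers κ₁ ≥ κ₂ ≥ ⋯ ≥ κ_n, an entire map F₊ : ℂ → M_n(ℂ) with invertible values, and a holomorphic map F₋ : ℂ× → M_n(ℂ) with invertible values possessing an invertible limit F₋(∞) as |z| → ∞, such that f(z) = F₊(z)·diag(z^{κ₁},…,z^{κ_n})·F₋(z) for all z ∈ ℂ×. Moreover, the n-tuple (κ₁,…,κ_n) is uniquely determined by f. -/

import Mathlib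

open Filter

/-- A Birkhoff decomposition `f = F₊ · diag(z^κ) · F₋` on `ℂ× = ℂ \ {0}`, where `F₊` is
entire and `GL_n`-valued on all of `ℂ`, and `F₋` is holomorphic and `GL_n`-valued on `ℂ×`
with an invertible limit at `∞`. -/
def EntireBirkhoffFactorization (n : ℕ) (f : ℂ → Matrix (Fin n) (Fin n) ℂ)
    (κ : Fin n → ℤ) : Prop :=
  ∃ Fp Fm : ℂ → Matrix (Fin n) (Fin n) ℂ, ∃ L : Matrix (Fin n) (Fin n) ℂ,
    (∀ i j, Differentiable ℂ fun z => Fp z i j) ∧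
    (∀ z : ℂ, IsUnit (Fp z)) ∧
    (∀ i j, DifferentiableOn ℂ (fun z => Fm z i j) {z : ℂ | z ≠ 0}) ∧
    (∀ z : ℂ, z ≠ 0 → IsUnit (Fm z)) ∧
    IsUnit L ∧
    (∀ i j, Tendsto (fun z => Fm z i j)
      (comap (fun z : ℂ => ‖z‖) atTop) (nhds (L i j))) ∧
    (∀ z : ℂ, z ≠ 0 → f z = Fp z * Matrix.diagonal (fun i => z ^ κ i) * Fm z)

/-!
The Laurent coefficients of `f` and `f⁻¹` are absolutely summable. Multiplying `f` by a factor close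
to `1` therefore truncates its Laurent series, and a Wiener–Hopf equation in `ℓ¹` with small kernel,
solved by contraction, turns that factor into a function of `z⁻¹`. The outcome is a pair of entire
functions with `P z = z ^ K • (f z * Q z⁻¹)`: a generic frame of sections, over the two charts of
`ℙ¹`, of a twist of the vector bundle glued by `f`.

Among all frames with `P z = f z * Q z⁻¹ * diag (z ^ m j)`, choose one minimizing `∑ j, m j`; this
sum is bounded below by Liouville's theorem applied to determinants. Were `det P` or `det Q` to
vanish somewhere, a combination of the columns could be divided by its zero, lowering the sum. So
`P` and `Q` are invertible everywhere, and `f z = P z * diag (z ^ (-m j)) * (Q z⁻¹)⁻¹`.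

For uniqueness, Liouville's theorem makes entries of the transition matrix between two
factorizations vanish; if the exponents differ, these form a zero block too large for an
invertible matrix.
-/

section Laurent

open Complex MeasureTheory Metric
open scoped Real

theorem circleIntegrable_of_continuousOn_compl_zero {E : Type*} [NormedAddCommGroup E]
    {F : ℂ → E} {r : ℝ} (hF : ContinuousOn F {0}ᶜ) (hr : 0 < r) : CircleIntegrable F 0 r :=
  (hF.mono fun _ hw => ne_of_mem_sphere hw hr.ne').circleIntegrable hr.le

variable {E : Type*} [NormedAddCommGroup E] [NormedSpace ℂ E]

theorem hasSum_circleIntegral_inv_sub_smul {F : ℂ → E} {r : ℝ} {z : ℂ} (hr : 0 ≤ r)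
    (hF : CircleIntegrable F 0 r) (hz : r < ‖z‖) :
    HasSum (fun n : ℕ => ∮ w in C(0, r), (w / z) ^ n • z⁻¹ • F w)
      (∮ w in C(0, r), (z - w)⁻¹ • F w) := by
  have hz₀ : z ≠ 0 := norm_pos_iff.mp (hr.trans_lt hz)
  have hq : r / ‖z‖ ∈ Set.Ico (0 : ℝ) 1 := ⟨by positivity, (div_lt_one (hr.trans_lt hz)).2 hz⟩
  refine intervalIntegral.hasSum_integral_of_dominated_convergence
    (fun n θ => r * ‖z‖⁻¹ * ‖F (circleMap 0 r θ)‖ * (r / ‖z‖) ^ n) (fun n => ?_) (fun n => ?_)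
    ?_ ?_ ?_
  · simp only [deriv_circleMap]
    apply_rules [AEStronglyMeasurable.smul, hF.def'.1] <;> apply Measurable.aestronglyMeasurable
    · fun_prop
    · fun_prop
    · fun_prop
  · refine Eventually.of_forall fun θ _ => le_of_eq ?_
    simp only [deriv_circleMap, norm_smul, norm_mul, norm_pow, norm_div, norm_circleMap_zero,
      norm_inv, norm_I, abs_of_nonneg hr]
    ring
  · exact Eventually.of_forall fun _ _ => (summable_geometric_of_lt_one hq.1 hq.2).mul_left _
  · simpa only [tsum_mul_left, tsum_geometric_of_lt_one hq.1 hq.2] using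
      ((hF.norm.continuousOn_mul continuousOn_const).mul_continuousOn continuousOn_const)
  · refine Eventually.of_forall fun θ _ => HasSum.const_smul _ ?_
    simp only [smul_smul]
    refine HasSum.smul_const ?_ _
    have hlt : ‖circleMap 0 r θ / z‖ < 1 := by simpa [abs_of_nonneg hr] using hq.2
    convert! (hasSum_geometric_of_norm_lt_one hlt).mul_right _ using 1
    rw [← mul_inv, sub_mul, one_mul, div_mul_cancel₀ _ hz₀]

theorem closedBall_diff_ball_zero_subset {r R : ℝ} (hr : 0 < r) :
    closedBall (0 : ℂ) R \ ball 0 r ⊆ {0}ᶜ := by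
  rintro w ⟨-, hw⟩ rfl
  exact hw (mem_ball_self hr)

theorem circleIntegral_eq_of_differentiableOn_compl_zero {F : ℂ → E} {r R : ℝ}
    (hF : DifferentiableOn ℂ F {0}ᶜ) (hr : 0 < r) (hR : 0 < R) :
    ∮ w in C(0, r), F w = ∮ w in C(0, R), F w := by
  wlog hle : r ≤ R generalizing r R
  · exact (this hR hr (le_of_not_ge hle)).symm
  refine (circleIntegral_eq_of_differentiable_on_annulus_off_countable hr hle
    Set.countable_empty (hF.continuousOn.mono (closedBall_diff_ball_zero_subset hr))
    fun w hw => ?_).symm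
  refine hF.differentiableAt (isOpen_compl_singleton.mem_nhds ?_)
  rintro rfl
  exact hw.1.2 (mem_closedBall_self hr.le)

/-- The `k`-th Laurent coefficient at the origin of a function on the punctured plane. -/
noncomputable def laurentCoeff (F : ℂ → E) (k : ℤ) : E :=
  (2 * π * I : ℂ)⁻¹ • ∮ w in C(0, 1), w ^ (-k - 1) • F w

theorem laurentCoeff_eq_circleIntegral {F : ℂ → E} {r : ℝ} (hF : DifferentiableOn ℂ F {0}ᶜ)
    (hr : 0 < r) (k : ℤ) :
    laurentCoeff F k = (2 * π * I : ℂ)⁻¹ • ∮ w in C(0, r), w ^ (-k - 1) • F w := by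
  rw [laurentCoeff, circleIntegral_eq_of_differentiableOn_compl_zero _ one_pos hr]
  exact fun w hw =>
    (differentiableAt_zpow.mpr (Or.inl hw)).differentiableWithinAt.smul (hF w hw)

theorem exists_norm_laurentCoeff_le {F : ℂ → E} {r : ℝ} (hF : DifferentiableOn ℂ F {0}ᶜ)
    (hr : 0 < r) : ∃ C, ∀ k : ℤ, ‖laurentCoeff F k‖ ≤ C * (r ^ k)⁻¹ := by
  obtain ⟨C, hC⟩ := (isCompact_sphere (0 : ℂ) r).exists_bound_of_continuousOn
    (hF.continuousOn.mono fun _ hw => ne_of_mem_sphere hw hr.ne')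
  refine ⟨C, fun k => ?_⟩
  rw [laurentCoeff_eq_circleIntegral hF hr]
  have hbound : ∀ w ∈ sphere (0 : ℂ) r, ‖w ^ (-k - 1) • F w‖ ≤ r ^ (-k - 1) * C := by
    intro w hw
    rw [norm_smul, norm_zpow, mem_sphere_zero_iff_norm.mp hw]
    exact mul_le_mul_of_nonneg_left (hC w hw) (by positivity)
  refine (circleIntegral.norm_two_pi_i_inv_smul_integral_le_of_norm_le_const hr.le hbound).trans_eq
    ?_
  rw [zpow_sub₀ hr.ne', zpow_neg, zpow_one]
  field_simp

theorem summable_norm_zpow_smul_laurentCoeff {F : ℂ → E} (hF : DifferentiableOn ℂ F {0}ᶜ)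
    {z : ℂ} (hz : z ≠ 0) : Summable fun k : ℤ => ‖z ^ k • laurentCoeff F k‖ := by
  obtain ⟨C, hC⟩ := exists_norm_laurentCoeff_le hF (r := 2 * ‖z‖) (by positivity)
  obtain ⟨D, hD⟩ := exists_norm_laurentCoeff_le hF (r := 2⁻¹ * ‖z‖) (by positivity)
  have hgeom (K : ℝ) : Summable fun n : ℕ => K * (2⁻¹ : ℝ) ^ n :=
    (summable_geometric_of_lt_one (by norm_num) (by norm_num)).mul_left K
  refine .of_nat_of_neg ((hgeom C).of_nonneg_of_le (fun _ => norm_nonneg _) fun n => ?_)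
    ((hgeom D).of_nonneg_of_le (fun _ => norm_nonneg _) fun n => ?_)
  · rw [norm_smul, norm_zpow]
    refine (mul_le_mul_of_nonneg_left (hC n) (by positivity)).trans_eq ?_
    simp only [zpow_natCast, mul_pow, inv_pow]
    field_simp
  · rw [norm_smul, norm_zpow]
    refine (mul_le_mul_of_nonneg_left (hD (-n)) (by positivity)).trans_eq ?_
    simp only [zpow_neg, zpow_natCast, mul_pow, inv_pow, inv_inv]
    field_simp

theorem hasSum_laurentCoeff_natCast {F : ℂ → E} (hF : DifferentiableOn ℂ F {0}ᶜ) {R : ℝ}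
    {z : ℂ} (hR : 0 < R) (hzR : ‖z‖ < R) :
    HasSum (fun n : ℕ => z ^ (n : ℤ) • laurentCoeff F n)
      ((2 * π * I : ℂ)⁻¹ • ∮ w in C(0, R), (w - z)⁻¹ • F w) := by
  have hcoeff (n : ℕ) : z ^ (n : ℤ) • laurentCoeff F n =
      (2 * π * I : ℂ)⁻¹ • ∮ w in C(0, R), (z / (w - 0)) ^ n • (w - 0)⁻¹ • F w := by
    rw [laurentCoeff_eq_circleIntegral hF hR, smul_comm, ← circleIntegral.integral_smul]
    congr 1
    refine circleIntegral.integral_congr hR.le fun w hw => ?_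
    have hw₀ : w ≠ 0 := ne_of_mem_sphere hw hR.ne'
    simp only [smul_smul, sub_zero]
    rw [zpow_sub₀ hw₀, zpow_neg, zpow_one, zpow_natCast, zpow_natCast, div_pow]
    congr 1
    field_simp
  have hsum := (hasSum_two_pi_I_cauchyPowerSeries_integral
    (circleIntegrable_of_continuousOn_compl_zero hF.continuousOn hR) hzR).const_smul
      (2 * π * I : ℂ)⁻¹
  simpa only [hcoeff, zero_add] using hsum

theorem hasSum_laurentCoeff_neg_natCast_add_one {F : ℂ → E} (hF : DifferentiableOn ℂ F {0}ᶜ)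
    {r : ℝ} {z : ℂ} (hr : 0 < r) (hrz : r < ‖z‖) :
    HasSum (fun n : ℕ => z ^ (-(n + 1 : ℤ)) • laurentCoeff F (-(n + 1 : ℤ)))
      ((2 * π * I : ℂ)⁻¹ • ∮ w in C(0, r), (z - w)⁻¹ • F w) := by
  have hz : z ≠ 0 := norm_pos_iff.mp (hr.trans hrz)
  have hcoeff (n : ℕ) : z ^ (-(n + 1 : ℤ)) • laurentCoeff F (-(n + 1 : ℤ)) =
      (2 * π * I : ℂ)⁻¹ • ∮ w in C(0, r), (w / z) ^ n • z⁻¹ • F w := by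
    rw [laurentCoeff_eq_circleIntegral hF hr, smul_comm, ← circleIntegral.integral_smul]
    congr 1
    refine circleIntegral.integral_congr hr.le fun w _ => ?_
    simp only [smul_smul]
    rw [neg_neg, add_sub_cancel_right, zpow_neg, zpow_add_one₀ hz, zpow_natCast, zpow_natCast,
      div_pow]
    congr 1
    field_simp
  simpa only [hcoeff] using (hasSum_circleIntegral_inv_sub_smul hr.le
    (circleIntegrable_of_continuousOn_compl_zero hF.continuousOn hr) hrz).const_smul
      (2 * π * I : ℂ)⁻¹

variable [CompleteSpace E]

theorem circleIntegral_dslope {F : ℂ → E} {ρ : ℝ} {z : ℂ} (hF : ContinuousOn F (sphere 0 ρ))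
    (hρ : 0 < ρ) (hz : ‖z‖ ≠ ρ) : ∮ w in C(0, ρ), dslope F z w =
      (∮ w in C(0, ρ), (w - z)⁻¹ • F w) - (∮ w in C(0, ρ), (w - z)⁻¹) • F z := by
  have hzw : ∀ w ∈ sphere (0 : ℂ) ρ, w ≠ z := by
    rintro w hw rfl
    exact hz (mem_sphere_zero_iff_norm.mp hw)
  have hinv : ContinuousOn (fun w => (w - z)⁻¹) (sphere (0 : ℂ) ρ) :=
    (continuousOn_id.sub continuousOn_const).inv₀ fun w hw => sub_ne_zero.mpr (hzw w hw)
  have hint : CircleIntegrable (fun w => (w - z)⁻¹ • F w) 0 ρ :=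
    (hinv.smul hF).circleIntegrable hρ.le
  have hint' : CircleIntegrable (fun w => (w - z)⁻¹ • F z) 0 ρ :=
    (hinv.smul continuousOn_const).circleIntegrable hρ.le
  rw [← circleIntegral.integral_smul_const, ← circleIntegral.integral_sub hint hint']
  refine circleIntegral.integral_congr hρ.le fun w hw => ?_
  rw [dslope_of_ne _ (hzw w hw), slope_def_module, smul_sub]

theorem two_pi_I_smul_eq_circleIntegral_add_circleIntegral {F : ℂ → E} {r R : ℝ} {z : ℂ}
    (hF : DifferentiableOn ℂ F {0}ᶜ) (hr : 0 < r) (hrz : r < ‖z‖) (hzR : ‖z‖ < R) :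
    (2 * π * I : ℂ) • F z =
      (∮ w in C(0, R), (w - z)⁻¹ • F w) + ∮ w in C(0, r), (z - w)⁻¹ • F w := by
  have hR : 0 < R := hr.trans (hrz.trans hzR)
  have hz : z ∈ ({0}ᶜ : Set ℂ) := norm_pos_iff.mp (hr.trans hrz)
  have hslope : DifferentiableOn ℂ (dslope F z) {0}ᶜ :=
    (differentiableOn_dslope (isOpen_compl_singleton.mem_nhds hz)).mpr hF
  have hcont {ρ : ℝ} (hρ : 0 < ρ) : ContinuousOn F (sphere 0 ρ) :=
    hF.continuousOn.mono fun _ hw => ne_of_mem_sphere hw hρ.ne'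
  have houtside : ∮ w in C(0, r), (w - z)⁻¹ = 0 := by
    have hdiff : DifferentiableOn ℂ (fun w => (w - z)⁻¹) (closedBall 0 r) :=
      (differentiableOn_id.sub_const z).inv fun w hw => sub_ne_zero.mpr <| by
        rintro rfl
        exact hrz.not_ge (mem_closedBall_zero_iff.mp hw)
    exact hdiff.diffContOnCl_ball subset_rfl |>.circleIntegral_eq_zero hr.le
  have hsame := circleIntegral_eq_of_differentiableOn_compl_zero hslope hr hR
  rw [circleIntegral_dslope (hcont hr) hr hrz.ne', circleIntegral_dslope (hcont hR) hR hzR.ne,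
    houtside,
    circleIntegral.integral_sub_inv_of_mem_ball (mem_ball_zero_iff.mpr hzR), zero_smul, sub_zero]
    at hsame
  have hneg : ∮ w in C(0, r), (z - w)⁻¹ • F w = -∮ w in C(0, r), (w - z)⁻¹ • F w := by
    rw [← neg_one_smul ℂ, ← circleIntegral.integral_smul]
    refine circleIntegral.integral_congr hr.le fun w _ => ?_
    rw [← neg_sub w z, inv_neg, neg_smul, neg_one_smul]
  rw [hneg, hsame]
  abel

theorem hasSum_laurentCoeff {F : ℂ → E} (hF : DifferentiableOn ℂ F {0}ᶜ) {z : ℂ} (hz : z ≠ 0) :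
    HasSum (fun k : ℤ => z ^ k • laurentCoeff F k) (F z) := by
  have hz' : 0 < ‖z‖ := norm_pos_iff.mpr hz
  obtain ⟨r, hr, hrz⟩ := exists_between hz'
  obtain ⟨R, hzR⟩ := exists_gt ‖z‖
  have hsum := HasSum.of_nat_of_neg_add_one (f := fun k : ℤ => z ^ k • laurentCoeff F k)
    (hasSum_laurentCoeff_natCast hF (hz'.trans hzR) hzR)
    (hasSum_laurentCoeff_neg_natCast_add_one hF hr hrz)
  rwa [← smul_add, ← two_pi_I_smul_eq_circleIntegral_add_circleIntegral hF hr hrz hzR,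
    inv_smul_smul₀ two_pi_I_ne_zero] at hsum

theorem exists_finset_tsum_norm_lt_eq_sub_sum {F : ℂ → E} (hF : DifferentiableOn ℂ F {0}ᶜ) {ε : ℝ}
    (hε : 0 < ε) : ∃ (T : Finset ℤ) (t : ℤ → E),
      (∀ z : ℂ, z ≠ 0 → Summable fun k => ‖z ^ k • t k‖) ∧ ∑' k, ‖t k‖ < ε ∧
      ∀ z ≠ 0, ∑' k, z ^ k • t k = F z - ∑ k ∈ T, z ^ k • laurentCoeff F k := by
  obtain ⟨T, hT⟩ : ∃ T : Finset ℤ, ∑' k : { k // k ∉ T }, ‖laurentCoeff F k‖ < ε :=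
    ((tendsto_order.1 (tendsto_tsum_compl_atTop_zero (‖laurentCoeff F ·‖))).2 _ hε).exists
  have hsum {z : ℂ} (hz : z ≠ 0) := summable_norm_zpow_smul_laurentCoeff hF hz
  refine ⟨T, (T : Set ℤ)ᶜ.indicator (laurentCoeff F), fun z hz => ?_, ?_, fun z hz => ?_⟩
  · refine (hsum hz).of_nonneg_of_le (fun _ => norm_nonneg _) fun k => ?_
    rw [norm_smul, norm_smul]
    exact mul_le_mul_of_nonneg_left (norm_indicator_le_norm_self _ _) (norm_nonneg _)
  · simp only [norm_indicator_eq_indicator_norm, ← tsum_subtype]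
    exact hT
  · rw [← (hasSum_laurentCoeff hF hz).tsum_eq, ← (hsum hz).of_norm.sum_add_tsum_compl (s := T),
      add_sub_cancel_left, tsum_subtype (T : Set ℤ)ᶜ fun k => z ^ k • laurentCoeff F k]
    exact tsum_congr fun k => (Set.indicator_smul_apply _ _ _ _).symm

end Laurent

section Convolution

open DiscreteConvolution

variable {M S A : Type*} [AddMonoid M] [CommSemiring S] [NormedRing A] [Algebra S A]

theorem addFiber_eq_preimage (k : M) : addFiber k = (fun p : M × M => p.1 + p.2) ⁻¹' {k} := by
  ext p
  exact mem_addFiber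

theorem addConvolutionExists_mul [CompleteSpace A] {a b : M → A} (ha : Summable (‖a ·‖))
    (hb : Summable (‖b ·‖)) : AddConvolutionExists (LinearMap.mul S A) a b := fun k =>
  (summable_mul_of_summable_norm ha hb).subtype (addFiber k)

theorem hasSum_addConvolution_mul [CompleteSpace A] {a b : M → A} (ha : Summable (‖a ·‖))
    (hb : Summable (‖b ·‖)) : HasSum (a ⋆₊[LinearMap.mul S A] b) ((∑' k, a k) * ∑' k, b k) := by
  rw [tsum_mul_tsum_of_summable_norm ha hb]
  convert! (summable_mul_of_summable_norm ha hb).hasSum.tsum_fiberwise (fun p => p.1 + p.2) with k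
  rw [addConvolution, addFiber_eq_preimage]
  rfl

theorem norm_addConvolution_mul_le {a b : M → A} (ha : Summable (‖a ·‖))
    (hb : Summable (‖b ·‖)) (k : M) :
    ‖(a ⋆₊[LinearMap.mul S A] b) k‖ ≤ ((‖a ·‖) ⋆₊[LinearMap.mul ℝ ℝ] (‖b ·‖)) k :=
  have hnorm : Summable fun p : addFiber k => ‖a p.1.1‖ * ‖b p.1.2‖ :=
    addConvolutionExists_mul (S := ℝ) ha.norm hb.norm k
  tsum_of_norm_bounded hnorm.hasSum fun _ => norm_mul_le _ _

theorem summable_norm_addConvolution_mul {a b : M → A} (ha : Summable (‖a ·‖))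
    (hb : Summable (‖b ·‖)) : Summable (‖(a ⋆₊[LinearMap.mul S A] b) ·‖) :=
  (hasSum_addConvolution_mul ha.norm hb.norm).summable.of_nonneg_of_le (fun _ => norm_nonneg _)
    (norm_addConvolution_mul_le ha hb)

theorem tsum_norm_addConvolution_mul_le {a b : M → A} (ha : Summable (‖a ·‖))
    (hb : Summable (‖b ·‖)) :
    ∑' k, ‖(a ⋆₊[LinearMap.mul S A] b) k‖ ≤ (∑' k, ‖a k‖) * ∑' k, ‖b k‖ :=
  have hconv := hasSum_addConvolution_mul (S := ℝ) ha.norm hb.norm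
  ((summable_norm_addConvolution_mul ha hb).tsum_le_tsum (norm_addConvolution_mul_le ha hb)
    hconv.summable).trans_eq hconv.tsum_eq

theorem zpow_smul_addConvolution_mul {𝕜 : Type*} [NormedField 𝕜] [NormedAlgebra 𝕜 A] {z : 𝕜}
    (hz : z ≠ 0) (a b : ℤ → A) (k : ℤ) : z ^ k • (a ⋆₊[LinearMap.mul 𝕜 A] b) k =
      ((fun j => z ^ j • a j) ⋆₊[LinearMap.mul 𝕜 A] fun j => z ^ j • b j) k := by
  simp only [addConvolution, ← tsum_const_smul'', LinearMap.mul_apply']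
  refine tsum_congr fun p => ?_
  rw [smul_mul_smul_comm, ← zpow_add₀ hz, mem_addFiber.mp p.2]

theorem tsum_zpow_smul_addConvolution_mul {𝕜 : Type*} [NormedField 𝕜] [NormedAlgebra 𝕜 A]
    [CompleteSpace A] {z : 𝕜} (hz : z ≠ 0) {a b : ℤ → A}
    (ha : Summable fun k => ‖z ^ k • a k‖) (hb : Summable fun k => ‖z ^ k • b k‖) :
    ∑' k, z ^ k • (a ⋆₊[LinearMap.mul 𝕜 A] b) k = (∑' k, z ^ k • a k) * ∑' k, z ^ k • b k := by
  simp only [zpow_smul_addConvolution_mul hz]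
  exact (hasSum_addConvolution_mul ha hb).tsum_eq

theorem summable_norm_zpow_smul_addConvolution_mul {𝕜 : Type*} [NormedField 𝕜]
    [NormedAlgebra 𝕜 A] {z : 𝕜} (hz : z ≠ 0) {a b : ℤ → A}
    (ha : Summable fun k => ‖z ^ k • a k‖) (hb : Summable fun k => ‖z ^ k • b k‖) :
    Summable fun k => ‖z ^ k • (a ⋆₊[LinearMap.mul 𝕜 A] b) k‖ := by
  simpa only [zpow_smul_addConvolution_mul hz] using summable_norm_addConvolution_mul ha hb

end Convolution

section WienerHopf

open DiscreteConvolution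
open scoped lp NNReal

theorem summable_norm_lp_one {ι E : Type*} [NormedAddCommGroup E] (x : ℓ¹(ι, E)) :
    Summable (‖x ·‖) := by
  simpa using (lp.memℓp x).summable one_pos

theorem memℓp_one_of_summable_norm {ι E : Type*} [NormedAddCommGroup E] {x : ι → E}
    (hx : Summable (‖x ·‖)) : Memℓp x 1 :=
  memℓp_gen (by simpa using hx)

theorem lp_one_norm_eq_tsum {ι E : Type*} [NormedAddCommGroup E] (x : ℓ¹(ι, E)) :
    ‖x‖ = ∑' i, ‖x i‖ := by
  simp [lp.norm_eq_tsum_rpow (p := 1) (by simp)]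

variable {A : Type*} [NormedRing A]

section Compression

variable {M S : Type*} [AddMonoid M] [CommSemiring S] [Algebra S A]

theorem summable_norm_indicator_addConvolution_mul (s : Set M) {a b : M → A}
    (ha : Summable (‖a ·‖)) (hb : Summable (‖b ·‖)) :
    Summable (‖s.indicator (a ⋆₊[LinearMap.mul S A] b) ·‖) :=
  (summable_norm_addConvolution_mul ha hb).of_nonneg_of_le (fun _ => norm_nonneg _)
    fun _ => norm_indicator_le_norm_self _ _

theorem tsum_norm_indicator_addConvolution_mul_le (s : Set M) {a b : M → A}
    (ha : Summable (‖a ·‖)) (hb : Summable (‖b ·‖)) :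
    ∑' k, ‖s.indicator (a ⋆₊[LinearMap.mul S A] b) k‖ ≤ (∑' k, ‖a k‖) * ∑' k, ‖b k‖ :=
  ((summable_norm_indicator_addConvolution_mul s ha hb).tsum_le_tsum
    (fun _ => norm_indicator_le_norm_self _ _) (summable_norm_addConvolution_mul ha hb)).trans
      (tsum_norm_addConvolution_mul_le ha hb)

theorem exists_add_indicator_addConvolution_mul_eq [CompleteSpace A] {e d : M → A}
    (he : Summable (‖e ·‖)) (hsmall : ∑' k, ‖e k‖ < 1) (hd : Summable (‖d ·‖)) (s : Set M) :
    ∃ x : M → A, Summable (‖x ·‖) ∧ x + s.indicator (e ⋆₊[LinearMap.mul S A] x) = d := by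
  let q : ℝ≥0 := ⟨∑' k, ‖e k‖, tsum_nonneg fun _ => norm_nonneg _⟩
  let T (x : ℓ¹(M, A)) : ℓ¹(M, A) :=
    ⟨d, memℓp_one_of_summable_norm hd⟩ -
      ⟨s.indicator (e ⋆₊[LinearMap.mul S A] x), memℓp_one_of_summable_norm
        (summable_norm_indicator_addConvolution_mul s he (summable_norm_lp_one x))⟩
  have hlip : LipschitzWith q T := LipschitzWith.of_dist_le_mul fun x y => by
    have hsub : T y - T x =
        ⟨s.indicator (e ⋆₊[LinearMap.mul S A] (x - y : ℓ¹(M, A))), memℓp_one_of_summable_norm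
          (summable_norm_indicator_addConvolution_mul s he (summable_norm_lp_one (x - y)))⟩ := by
      have hadd := (addConvolutionExists_mul he (summable_norm_lp_one (x - y))).distrib_add
        (LinearMap.mul S A) (addConvolutionExists_mul he (summable_norm_lp_one y))
      rw [← lp.coeFn_add, sub_add_cancel] at hadd
      simp only [T, sub_sub_sub_cancel_left]
      refine sub_eq_of_eq_add (Subtype.ext ?_)
      simp only [hadd, Set.indicator_add']
      rfl
    rw [dist_comm, dist_eq_norm, dist_eq_norm, hsub, lp_one_norm_eq_tsum, lp_one_norm_eq_tsum]
    exact tsum_norm_indicator_addConvolution_mul_le s he (summable_norm_lp_one (x - y))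
  obtain ⟨x, hx, -⟩ := ContractingWith.exists_fixedPoint ⟨hsmall, hlip⟩ (0 : ℓ¹(M, A))
    (edist_ne_top _ _)
  refine ⟨x, summable_norm_lp_one x, ?_⟩
  have hfix : d - s.indicator (e ⋆₊[LinearMap.mul S A] x) = x := congrArg Subtype.val hx
  exact eq_sub_iff_add_eq.mp hfix.symm

end Compression

theorem exists_wienerHopf_solution {S : Type*} [CommSemiring S] [Algebra S A] [CompleteSpace A]
    {e : ℤ → A} (he : Summable (‖e ·‖)) (hsmall : (∑' k, ‖e k‖) * (1 + ‖(1 : A)‖) < 1) :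
    ∃ x : ℤ → A, Summable (‖x ·‖) ∧ (∀ k < 0, x k = 0) ∧
      (∀ k > 0, (x + e ⋆₊[LinearMap.mul S A] x) k = 0) ∧ IsUnit (∑' k, x k) := by
  set q := ∑' k, ‖e k‖
  have hq₀ : 0 ≤ q := tsum_nonneg fun _ => norm_nonneg _
  have hq : q < 1 := by nlinarith [norm_nonneg (1 : A)]
  let δ : ℤ → A := Pi.single 0 1
  have hδ : HasSum δ 1 := hasSum_pi_single 0 1
  have hδ' : HasSum (‖δ ·‖) ‖(1 : A)‖ := by
    convert! hasSum_pi_single (0 : ℤ) ‖(1 : A)‖ using 2 with k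
    rcases eq_or_ne k 0 with rfl | hk <;> simp [δ, *]
  obtain ⟨x, hx, hxδ⟩ :=
    exists_add_indicator_addConvolution_mul_eq (S := S) he hq hδ'.summable (Set.Ici 0)
  refine ⟨x, hx, fun k hk => ?_, fun k hk => ?_, ?_⟩
  · simpa [δ, hk.ne, hk] using congrFun hxδ k
  · simpa [δ, hk.ne', hk.le] using congrFun hxδ k
  · set t := (Set.Ici 0).indicator (e ⋆₊[LinearMap.mul S A] x)
    have ht : Summable (‖t ·‖) := summable_norm_indicator_addConvolution_mul _ he hx
    have htx : ∑' k, ‖t k‖ ≤ q * ∑' k, ‖x k‖ := tsum_norm_indicator_addConvolution_mul_le _ he hx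
    have hxt : ∑' k, ‖x k‖ ≤ ‖(1 : A)‖ + ∑' k, ‖t k‖ := by
      rw [← hδ'.tsum_eq, ← hδ'.summable.tsum_add ht]
      refine hx.tsum_le_tsum (fun k => ?_) (hδ'.summable.add ht)
      rw [← hxδ]
      simpa using norm_sub_le ((x + t) k) (t k)
    have hsum : ∑' k, x k = 1 - ∑' k, t k := by
      rw [← hδ.tsum_eq, ← hxδ]
      exact eq_sub_of_add_eq (hx.of_norm.tsum_add ht.of_norm).symm
    rw [hsum]
    refine isUnit_one_sub_of_norm_lt_one ((norm_tsum_le_tsum_norm ht).trans_lt ?_)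
    nlinarith

end WienerHopf

section EntirePair

open Complex Metric Topology DiscreteConvolution

theorem differentiable_tsum_pow_smul {E : Type*} [NormedAddCommGroup E] [NormedSpace ℂ E]
    [CompleteSpace E] {c : ℕ → E}
    (hc : ∃ᶠ r : ℝ in atTop, Summable fun n : ℕ => r ^ n * ‖c n‖) :
    Differentiable ℂ fun z : ℂ => ∑' n, z ^ n • c n := by
  intro z
  obtain ⟨r, hr, hzr⟩ := (hc.and_eventually (eventually_gt_atTop ‖z‖)).exists
  refine (differentiableOn_tsum_of_summable_norm hr (fun n => by fun_prop) isOpen_ball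
    fun n w hw => ?_).differentiableAt (isOpen_ball.mem_nhds (mem_ball_zero_iff.mpr hzr))
  rw [norm_smul, norm_pow]
  have hwr : ‖w‖ ≤ r := (mem_ball_zero_iff.mp hw).le
  gcongr

theorem exists_differentiable_eqOn_compl_zero {E : Type*} [NormedAddCommGroup E]
    [NormedSpace ℂ E] [CompleteSpace E] {F : ℂ → E} (hF : DifferentiableOn ℂ F {0}ᶜ) {C : ℝ}
    (hC : ∀ z ≠ 0, ‖z‖ ≤ 1 → ‖F z‖ ≤ C) : ∃ P, Differentiable ℂ P ∧ Set.EqOn P F {0}ᶜ := by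
  refine ⟨Function.update F 0 (limUnder (𝓝[≠] 0) F), ?_, fun z hz => Function.update_of_ne hz _ _⟩
  have hbdd : BddAbove (norm ∘ F '' (closedBall 0 1 \ {0})) := by
    refine ⟨C, ?_⟩
    rintro _ ⟨z, ⟨hz, hz₀⟩, rfl⟩
    exact hC z hz₀ (mem_closedBall_zero_iff.mp hz)
  intro z
  rcases eq_or_ne z 0 with rfl | hz
  · exact (differentiableOn_update_limUnder_of_bddAbove (closedBall_mem_nhds 0 one_pos)
      (hF.mono fun _ hw => hw.2) hbdd).differentiableAt (closedBall_mem_nhds 0 one_pos)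
  · refine (hF.differentiableAt (isOpen_compl_singleton.mem_nhds hz)).congr_of_eventuallyEq ?_
    filter_upwards [isOpen_compl_singleton.mem_nhds hz] with w hw
    exact Function.update_of_ne hw _ _

theorem exists_differentiable_inv_eq_tsum_zpow_smul {E : Type*} [NormedAddCommGroup E]
    [NormedSpace ℂ E] [CompleteSpace E] {y : ℤ → E} (hy : ∀ k > 0, y k = 0)
    (hsum : ∀ z : ℂ, z ≠ 0 → ‖z‖ ≤ 1 → Summable fun k => ‖z ^ k • y k‖) :
    ∃ Q : ℂ → E, Differentiable ℂ Q ∧ ∀ z, Q z⁻¹ = ∑' k, z ^ k • y k := by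
  have hinj : Function.Injective fun n : ℕ => -(n : ℤ) := fun m n h => by simpa using h
  refine ⟨fun u => ∑' n : ℕ, u ^ n • y (-n), differentiable_tsum_pow_smul ?_, fun z => ?_⟩
  · refine (eventually_ge_atTop 1).frequently.mono fun r hr => ?_
    have hr₀ : 0 < r := one_pos.trans_le hr
    refine ((hsum (r : ℂ)⁻¹ (by simpa using hr₀.ne') ?_).comp_injective hinj).congr fun n => ?_
    · simpa [abs_of_pos hr₀] using inv_le_one_of_one_le₀ hr
    · simp [norm_smul, abs_of_pos hr₀]
  · rw [← hinj.tsum_eq]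
    · simp
    · intro k hk
      have hk₀ : k ≤ 0 := not_lt.mp fun h => hk (by simp [hy k h])
      exact ⟨k.natAbs, by dsimp only; lia⟩

variable {A : Type*} [NormedRing A] [NormedAlgebra ℂ A] [CompleteSpace A]

theorem exists_mul_one_add_tsum_eq_sum {f : ℂ → A} (hf : DifferentiableOn ℂ f {0}ᶜ)
    (hu : ∀ z ≠ 0, IsUnit (f z)) {ε : ℝ} (hε : 0 < ε) :
    ∃ (T : Finset ℤ) (e : ℤ → A), (∀ z : ℂ, z ≠ 0 → Summable fun k => ‖z ^ k • e k‖) ∧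
      ∑' k, ‖e k‖ < ε ∧
      ∀ z ≠ 0, f z * (1 + ∑' k, z ^ k • e k) = ∑ k ∈ T, z ^ k • laurentCoeff f k := by
  have hg : DifferentiableOn ℂ (fun z => Ring.inverse (f z)) {0}ᶜ := hf.inverse hu
  set b := laurentCoeff fun z => Ring.inverse (f z)
  have hb (z : ℂ) (hz : z ≠ 0) : Summable fun k => ‖z ^ k • b k‖ :=
    summable_norm_zpow_smul_laurentCoeff hg hz
  have hb₁ : Summable (‖b ·‖) := by simpa using hb 1 one_ne_zero
  set B := ∑' k, ‖b k‖
  have hB : 0 < B + 1 := add_pos_of_nonneg_of_pos (tsum_nonneg fun _ => norm_nonneg _) one_pos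
  obtain ⟨T, t, ht, htail, htsum⟩ := exists_finset_tsum_norm_lt_eq_sub_sum hf (div_pos hε hB)
  have ht₁ : Summable (‖t ·‖) := by simpa using ht 1 one_ne_zero
  refine ⟨T, -(b ⋆₊[LinearMap.mul ℂ A] t), fun z hz => ?_, ?_, fun z hz => ?_⟩
  · simpa using summable_norm_zpow_smul_addConvolution_mul hz (hb z hz) (ht z hz)
  · simp only [Pi.neg_apply, norm_neg]
    calc ∑' k, ‖(b ⋆₊[LinearMap.mul ℂ A] t) k‖
        ≤ B * ∑' k, ‖t k‖ := tsum_norm_addConvolution_mul_le hb₁ ht₁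
      _ ≤ (B + 1) * ∑' k, ‖t k‖ :=
        mul_le_mul_of_nonneg_right (le_add_of_nonneg_right zero_le_one)
          (tsum_nonneg fun _ => norm_nonneg _)
      _ < ε := (lt_div_iff₀' hB).mp htail
  · simp only [Pi.neg_apply, smul_neg, tsum_neg]
    rw [tsum_zpow_smul_addConvolution_mul hz (hb z hz) (ht z hz), htsum z hz,
      (hasSum_laurentCoeff hg hz).tsum_eq, mul_add, mul_neg, ← mul_assoc,
      Ring.mul_inverse_cancel _ (hu z hz)]
    simp

theorem exists_differentiable_eq_one_add_mul {e : ℤ → A}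
    (he : ∀ z : ℂ, z ≠ 0 → Summable fun k => ‖z ^ k • e k‖)
    (hsmall : (∑' k, ‖e k‖) * (1 + ‖(1 : A)‖) < 1) :
    ∃ (Q X : ℂ → A) (C : ℝ), Differentiable ℂ Q ∧ IsUnit (Q 1) ∧
      ∀ z ≠ 0, ‖z‖ ≤ 1 → ‖X z‖ ≤ C ∧ Q z⁻¹ = (1 + ∑' k, z ^ k • e k) * X z := by
  have he₁ : Summable (‖e ·‖) := by simpa using he 1 one_ne_zero
  obtain ⟨x, hx, hxneg, hypos, hunit⟩ := exists_wienerHopf_solution (S := ℂ) he₁ hsmall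
  set y := x + e ⋆₊[LinearMap.mul ℂ A] x
  have hterm (z : ℂ) (hz₁ : ‖z‖ ≤ 1) (k : ℤ) : ‖z ^ k • x k‖ ≤ ‖x k‖ := by
    rcases lt_or_ge k 0 with hk | hk
    · simp [hxneg k hk]
    · lift k to ℕ using hk
      rw [norm_smul, norm_zpow, zpow_natCast]
      exact mul_le_of_le_one_left (norm_nonneg _) (pow_le_one₀ (norm_nonneg _) hz₁)
  have hxz (z : ℂ) (hz₁ : ‖z‖ ≤ 1) : Summable fun k => ‖z ^ k • x k‖ :=
    hx.of_nonneg_of_le (fun _ => norm_nonneg _) (hterm z hz₁)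
  have hconv (z : ℂ) (hz : z ≠ 0) (hz₁ : ‖z‖ ≤ 1) :=
    summable_norm_zpow_smul_addConvolution_mul hz (he z hz) (hxz z hz₁)
  have hy (z : ℂ) (hz : z ≠ 0) (hz₁ : ‖z‖ ≤ 1) : Summable fun k => ‖z ^ k • y k‖ := by
    refine ((hxz z hz₁).add (hconv z hz hz₁)).of_nonneg_of_le (fun _ => norm_nonneg _) fun k => ?_
    simpa only [y, Pi.add_apply, smul_add] using norm_add_le _ _
  have hysum (z : ℂ) (hz : z ≠ 0) (hz₁ : ‖z‖ ≤ 1) :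
      ∑' k, z ^ k • y k = (1 + ∑' k, z ^ k • e k) * ∑' k, z ^ k • x k := by
    simp only [y, Pi.add_apply, smul_add]
    rw [(hxz z hz₁).of_norm.tsum_add (hconv z hz hz₁).of_norm,
      tsum_zpow_smul_addConvolution_mul hz (he z hz) (hxz z hz₁), one_add_mul]
  obtain ⟨Q, hQ, hQy⟩ := exists_differentiable_inv_eq_tsum_zpow_smul hypos hy
  refine ⟨Q, fun z => ∑' k, z ^ k • x k, ∑' k, ‖x k‖, hQ, ?_, fun z hz hz₁ =>
    ⟨tsum_of_norm_bounded hx.hasSum (hterm z hz₁), (hQy z).trans (hysum z hz hz₁)⟩⟩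
  have hQ₁ : Q 1 = (1 + ∑' k, e k) * ∑' k, x k := by
    simpa using (hQy 1).trans (hysum 1 one_ne_zero norm_one.le)
  have he_lt : ∑' k, ‖e k‖ < 1 := by
    have he₀ : 0 ≤ ∑' k, ‖e k‖ := tsum_nonneg fun _ => norm_nonneg _
    nlinarith [norm_nonneg (1 : A)]
  rw [hQ₁]
  refine IsUnit.mul ?_ hunit
  simpa using isUnit_one_sub_of_norm_lt_one (x := -∑' k, e k)
    ((norm_neg _).trans_lt ((norm_tsum_le_tsum_norm he₁).trans_lt he_lt))

theorem exists_differentiable_zpow_smul_eq {f : ℂ → A} (hf : DifferentiableOn ℂ f {0}ᶜ)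
    (hu : ∀ z ≠ 0, IsUnit (f z)) :
    ∃ (K : ℕ) (P Q : ℂ → A), Differentiable ℂ P ∧ Differentiable ℂ Q ∧ IsUnit (Q 1) ∧
      ∀ z ≠ 0, P z = z ^ K • (f z * Q z⁻¹) := by
  obtain ⟨T, e, he, hsmall, hfe⟩ :=
    exists_mul_one_add_tsum_eq_sum hf hu (ε := (1 + ‖(1 : A)‖)⁻¹) (by positivity)
  obtain ⟨Q, X, C, hQ, hQ₁, hQX⟩ := exists_differentiable_eq_one_add_mul he
    ((lt_div_iff₀ (by positivity)).mp (by rwa [one_div]))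
  let K := T.sup Int.natAbs
  let F (z : ℂ) : A := z ^ K • (f z * Q z⁻¹)
  have hF : DifferentiableOn ℂ F {0}ᶜ := by
    refine (differentiableOn_id.pow K).smul (hf.mul ?_)
    exact hQ.comp_differentiableOn (differentiableOn_inv)
  have hbound (z : ℂ) (hz : z ≠ 0) (hz₁ : ‖z‖ ≤ 1) :
      ‖F z‖ ≤ (∑ k ∈ T, ‖laurentCoeff f k‖) * C := by
    obtain ⟨hX, hQz⟩ := hQX z hz hz₁
    have hFz : F z = (∑ k ∈ T, z ^ (K + k) • laurentCoeff f k) * X z := by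
      simp only [F, hQz, zpow_add₀ hz, zpow_natCast, mul_smul, ← Finset.smul_sum]
      rw [← mul_assoc, hfe z hz, smul_mul_assoc]
    rw [hFz]
    refine (norm_mul_le _ _).trans (mul_le_mul ?_ hX (norm_nonneg _) (by positivity))
    refine (norm_sum_le _ _).trans (Finset.sum_le_sum fun k hk => ?_)
    have hKk : 0 ≤ K + k := by
      have := Finset.le_sup (f := Int.natAbs) hk
      lia
    rw [norm_smul, norm_zpow]
    exact mul_le_of_le_one_left (norm_nonneg _) (zpow_le_one₀ (norm_pos_iff.mpr hz) hz₁ hKk)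
  obtain ⟨P, hP, hPF⟩ := exists_differentiable_eqOn_compl_zero hF hbound
  exact ⟨K, P, Q, hP, hQ, hQ₁, fun z hz => hPF hz⟩

end EntirePair

theorem prod_zpow_eq_zpow_sum {ι G₀ : Type*} [CommGroupWithZero G₀] {a : G₀} (ha : a ≠ 0)
    (s : Finset ι) (m : ι → ℤ) : ∏ j ∈ s, a ^ m j = a ^ ∑ j ∈ s, m j := by
  classical
  induction s using Finset.induction_on with
  | empty => simp
  | insert j s hj ih => rw [Finset.prod_insert hj, Finset.sum_insert hj, ih, zpow_add₀ ha]

section EntireMaps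

open Topology

variable {E : Type*} [NormedAddCommGroup E] [NormedSpace ℂ E]

theorem eq_zero_of_eq_zpow_smul {g b : ℂ → E} {N : ℤ} {L : E} (hg : Differentiable ℂ g)
    (hN : N < 0) (hb : Tendsto b (Bornology.cobounded ℂ) (𝓝 L))
    (hgb : ∀ z ≠ 0, g z = z ^ N • b z) (z : ℂ) : g z = 0 := by
  obtain ⟨k, rfl⟩ := Int.exists_eq_neg_ofNat hN.le
  have hlim : Tendsto (fun z : ℂ => z⁻¹ ^ k • b z) (Bornology.cobounded ℂ) (𝓝 0) := by
    simpa [show k ≠ 0 by lia] using (tendsto_inv₀_cobounded.pow k).smul hb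
  refine hg.apply_eq_of_tendsto_cocompact z ?_
  rw [← Metric.cobounded_eq_cocompact]
  refine hlim.congr' ?_
  filter_upwards [Bornology.eventually_ne_cobounded 0] with w hw
  rw [hgb w hw, zpow_neg, zpow_natCast, inv_pow]

variable [CompleteSpace E]

theorem exists_differentiable_eq_sub_smul {p : ℂ → E} (hp : Differentiable ℂ p) {a : ℂ}
    (ha : p a = 0) : ∃ p', Differentiable ℂ p' ∧ ∀ z, p z = (z - a) • p' z :=
  ⟨dslope p a, differentiableOn_univ.mp
    ((Complex.differentiableOn_dslope univ_mem).mpr hp.differentiableOn),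
    fun z => by rw [sub_smul_dslope, ha, sub_zero]⟩

theorem exists_differentiable_eq_one_sub_mul_smul {q : ℂ → E} (hq : Differentiable ℂ q)
    {a : ℂ} (ha : a ≠ 0 → q a⁻¹ = 0) :
    ∃ q', Differentiable ℂ q' ∧ ∀ u, q u = (1 - a * u) • q' u := by
  rcases eq_or_ne a 0 with rfl | ha₀
  · exact ⟨q, hq, by simp⟩
  · obtain ⟨q', hq', hqq'⟩ := exists_differentiable_eq_sub_smul hq (ha ha₀)
    refine ⟨fun u => -a⁻¹ • q' u, hq'.const_smul _, fun u => ?_⟩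
    rw [hqq', smul_smul]
    congr 1
    field_simp
    ring

end EntireMaps

section MatrixValued

open Matrix

attribute [local instance] Matrix.linftyOpNormedRing Matrix.linftyOpNormedAlgebra

variable {𝕜 E ι κ : Type*} [NontriviallyNormedField 𝕜] [NormedAddCommGroup E] [NormedSpace 𝕜 E]

theorem differentiable_matrix_iff [Finite κ] {P : E → Matrix ι κ 𝕜} :
    Differentiable 𝕜 P ↔ ∀ i j, Differentiable 𝕜 fun z => P z i j :=
  have := Fintype.ofFinite κ
  differentiable_pi.trans (forall_congr' fun _ => differentiable_pi)

theorem differentiableOn_matrix_iff [Finite κ] {P : E → Matrix ι κ 𝕜} {s : Set E} :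
    DifferentiableOn 𝕜 P s ↔ ∀ i j, DifferentiableOn 𝕜 (fun z => P z i j) s :=
  have := Fintype.ofFinite κ
  differentiableOn_pi.trans (forall_congr' fun _ => differentiableOn_pi)

variable [Fintype ι] [DecidableEq ι]

theorem differentiable_det {P : 𝕜 → Matrix ι ι 𝕜} (hP : Differentiable 𝕜 P) :
    Differentiable 𝕜 fun z => (P z).det := by
  simp only [det_apply]
  exact .fun_sum fun σ _ => .const_smul
    (.fun_finsetProd fun i _ => differentiable_matrix_iff.mp hP _ _) _

theorem differentiableOn_matrix_inv {f : ℂ → Matrix ι ι ℂ} {s : Set ℂ}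
    (hf : DifferentiableOn ℂ f s) (hu : ∀ z ∈ s, IsUnit (f z)) :
    DifferentiableOn ℂ (fun z => (f z)⁻¹) s := by
  simp only [nonsing_inv_eq_ringInverse]
  exact hf.inverse hu

theorem exists_differentiable_eq_mul_diagonal_update {M : E → Matrix ι ι 𝕜}
    (hM : Differentiable 𝕜 M) {i : ι} {g : E → 𝕜} {p : E → ι → 𝕜} (hp : Differentiable 𝕜 p)
    (hMp : ∀ z, (M z).col i = g z • p z) :
    ∃ M', Differentiable 𝕜 M' ∧ ∀ z, M z = M' z * diagonal (Function.update 1 i (g z)) := by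
  refine ⟨fun z => (M z).updateCol i (p z), differentiable_matrix_iff.mpr fun k j => ?_,
    fun z => ?_⟩
  · rcases eq_or_ne j i with rfl | hj
    · simpa using differentiable_pi.mp hp k
    · simpa [hj] using differentiable_matrix_iff.mp hM k j
  · ext k j
    rcases eq_or_ne j i with rfl | hj
    · simpa [mul_comm] using congrFun (hMp z) k
    · simp [hj]

end MatrixValued

section SectionFrame

open Matrix Topology

attribute [local instance] Matrix.linftyOpNormedRing Matrix.linftyOpNormedAlgebra

variable {ι : Type*} [Fintype ι] [DecidableEq ι]

/-- The columns of `P` and `Q` are the expressions, in the charts at `0` and at `∞` of the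
projective line, of sections of the twists by `m j` of the vector bundle with clutching function
`f`; these sections are linearly independent at the point `1`, hence generically. -/
structure IsSectionFrame (f : ℂ → Matrix ι ι ℂ) (m : ι → ℤ) (P Q : ℂ → Matrix ι ι ℂ) : Prop where
  differentiable_left : Differentiable ℂ P
  differentiable_right : Differentiable ℂ Q
  det_right_one_ne_zero : (Q 1).det ≠ 0
  left_eq : ∀ z ≠ 0, P z = f z * Q z⁻¹ * diagonal fun j => z ^ m j

theorem exists_isSectionFrame {f : ℂ → Matrix ι ι ℂ} (hf : DifferentiableOn ℂ f {0}ᶜ)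
    (hu : ∀ z ≠ 0, IsUnit (f z)) : ∃ m P Q, IsSectionFrame f m P Q := by
  obtain ⟨K, P, Q, hP, hQ, hQ₁, hPQ⟩ := exists_differentiable_zpow_smul_eq hf hu
  refine ⟨fun _ => K, P, Q, hP, hQ, ((isUnit_iff_isUnit_det _).mp hQ₁).ne_zero, fun z hz => ?_⟩
  rw [hPQ z hz, ← smul_one_eq_diagonal, mul_smul_comm, mul_one, zpow_natCast]

namespace IsSectionFrame

variable {f : ℂ → Matrix ι ι ℂ} {m : ι → ℤ} {P Q : ℂ → Matrix ι ι ℂ}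

theorem det_left_eq (h : IsSectionFrame f m P Q) {z : ℂ} (hz : z ≠ 0) :
    (P z).det = (f z).det * (Q z⁻¹).det * z ^ ∑ j, m j := by
  rw [h.left_eq z hz, det_mul, det_mul, det_diagonal, prod_zpow_eq_zpow_sum hz]

theorem swap (h : IsSectionFrame f m P Q) (hu : ∀ z ≠ 0, IsUnit (f z)) :
    IsSectionFrame (fun u => (f u⁻¹)⁻¹) m Q P where
  differentiable_left := h.differentiable_right
  differentiable_right := h.differentiable_left
  det_right_one_ne_zero := by
    simpa [h.det_left_eq one_ne_zero, h.det_right_one_ne_zero] using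
      ((isUnit_iff_isUnit_det _).mp (hu 1 one_ne_zero)).ne_zero
  left_eq u hu₀ := by
    have hfu := (isUnit_iff_isUnit_det _).mp (hu u⁻¹ (inv_ne_zero hu₀))
    rw [h.left_eq u⁻¹ (inv_ne_zero hu₀), inv_inv, mul_assoc (f u⁻¹),
      nonsing_inv_mul_cancel_left _ _ hfu, mul_assoc, diagonal_mul_diagonal]
    simp [zpow_ne_zero _ hu₀]

theorem exists_mul_right (h : IsSectionFrame f m P Q) {C : Matrix ι ι ℂ} (hC : C.det ≠ 0)
    (hCm : ∀ j k, C j k ≠ 0 → m j ≤ m k) :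
    ∃ Q', IsSectionFrame f m (fun z => P z * C) Q' := by
  let R (u : ℂ) : Matrix ι ι ℂ := of fun j k => C j k * u ^ (m k - m j).toNat
  have hR₁ : R 1 = C := by ext; simp [R]
  have hR : Differentiable ℂ R := differentiable_matrix_iff.mpr fun j k => by
    simp only [R, of_apply]
    fun_prop
  have hRC (z : ℂ) (hz : z ≠ 0) :
      (R z⁻¹ * diagonal fun k => z ^ m k) = (diagonal fun j => z ^ m j) * C := by
    ext j k
    simp only [mul_diagonal, diagonal_mul, R, of_apply]
    rcases eq_or_ne (C j k) 0 with hjk | hjk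
    · simp [hjk]
    · rw [← zpow_natCast, Int.toNat_of_nonneg (sub_nonneg.mpr (hCm j k hjk)), _root_.inv_zpow',
        mul_assoc, ← zpow_add₀ hz, mul_comm]
      congr 2
      ring
  refine ⟨fun u => Q u * R u, h.differentiable_left.mul_const C, h.differentiable_right.mul hR,
    ?_, fun z hz => ?_⟩
  · rw [hR₁, det_mul]
    exact mul_ne_zero h.det_right_one_ne_zero hC
  · rw [h.left_eq z hz, mul_assoc _ _ C, ← hRC z hz]
    simp only [mul_assoc]

theorem of_forall_ne {a : ℂ} (hf : DifferentiableOn ℂ f {0}ᶜ) (hP : Differentiable ℂ P)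
    (hQ : Differentiable ℂ Q) (hdet : (Q 1).det ≠ 0)
    (hPQ : ∀ z ≠ 0, z ≠ a → P z = f z * Q z⁻¹ * diagonal fun j => z ^ m j) :
    IsSectionFrame f m P Q := by
  refine ⟨hP, hQ, hdet, fun z hz => ?_⟩
  rcases eq_or_ne z a with rfl | hza
  · have hfz := hf.continuousOn.continuousAt (isOpen_compl_singleton.mem_nhds hz)
    have hQz := hQ.continuous.continuousAt.comp (continuousAt_inv₀ hz)
    have hDz : ContinuousAt (fun w : ℂ => diagonal fun j => w ^ m j) z :=
      continuous_id.matrix_diagonal.continuousAt.comp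
        (continuousAt_pi.mpr fun j => continuousAt_zpow₀ z (m j) (.inl hz))
    refine ((hP.continuous.continuousAt.eventuallyEq_nhds_iff_eventuallyEq_nhdsNE
      ((hfz.mul hQz).mul hDz)).mp ?_).eq_of_nhds
    filter_upwards [self_mem_nhdsWithin, nhdsWithin_le_nhds
      (isOpen_compl_singleton.mem_nhds hz)] with w hwz hw
    exact hPQ w hw hwz
  · exact hPQ z hz hza

theorem exists_update_sub_one (h : IsSectionFrame f m P Q) (hf : DifferentiableOn ℂ f {0}ᶜ)
    (hu : ∀ z ≠ 0, IsUnit (f z)) {a : ℂ} {i : ι} (ha : (P a).col i = 0) :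
    ∃ P' Q', IsSectionFrame f (Function.update m i (m i - 1)) P' Q' := by
  have hPi : Differentiable ℂ fun z => (P z).col i :=
    differentiable_pi.mpr fun k => differentiable_matrix_iff.mp h.differentiable_left k i
  have hQi : Differentiable ℂ fun z => (Q z).col i :=
    differentiable_pi.mpr fun k => differentiable_matrix_iff.mp h.differentiable_right k i
  have hQa (ha₀ : a ≠ 0) : (Q a⁻¹).col i = 0 := by
    rw [(h.swap hu).left_eq a⁻¹ (inv_ne_zero ha₀), inv_inv, ← mulVec_single_one,
      ← mulVec_mulVec, diagonal_mulVec_single, ← mulVec_mulVec, mulVec_single, ha]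
    simp
  obtain ⟨p, hp, hPp⟩ := exists_differentiable_eq_sub_smul hPi ha
  obtain ⟨q, hq, hQq⟩ := exists_differentiable_eq_one_sub_mul_smul hQi hQa
  obtain ⟨P', hP', hPP'⟩ :=
    exists_differentiable_eq_mul_diagonal_update h.differentiable_left hp hPp
  obtain ⟨Q', hQ', hQQ'⟩ :=
    exists_differentiable_eq_mul_diagonal_update h.differentiable_right hq hQq
  let D (z : ℂ) := diagonal fun j => z ^ Function.update m i (m i - 1) j
  have hD (z : ℂ) (hz : z ≠ 0) : diagonal (Function.update 1 i (1 - a * z⁻¹)) *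
      diagonal (fun j => z ^ m j) = D z * diagonal (Function.update 1 i (z - a)) := by
    rw [diagonal_mul_diagonal, diagonal_mul_diagonal]
    congr! 2 with j
    rcases eq_or_ne j i with rfl | hj
    · simp only [Function.update_self, zpow_sub_one₀ hz]
      field_simp
    · simp [hj]
  have hne (z : ℂ) (hz : z ≠ 0) (hza : z ≠ a) : P' z = f z * Q' z⁻¹ * D z := by
    have hunit : IsUnit (diagonal (Function.update 1 i (z - a))) := by
      rw [isUnit_diagonal, Pi.isUnit_iff]
      intro j
      rcases eq_or_ne j i with rfl | hj <;> simp [*, sub_ne_zero]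
    refine hunit.mul_right_cancel ?_
    rw [← hPP' z, mul_assoc _ (D z), ← hD z hz, h.left_eq z hz, hQQ']
    simp only [mul_assoc]
  refine ⟨P', Q', of_forall_ne hf hP' hQ' (fun h₀ => h.det_right_one_ne_zero ?_) hne⟩
  rw [hQQ', det_mul, h₀, zero_mul]

theorem exists_sum_lt_of_det_left_eq_zero (h : IsSectionFrame f m P Q)
    (hf : DifferentiableOn ℂ f {0}ᶜ) (hu : ∀ z ≠ 0, IsUnit (f z)) {a : ℂ} (ha : (P a).det = 0) :
    ∃ m' P' Q', IsSectionFrame f m' P' Q' ∧ ∑ j, m' j < ∑ j, m j := by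
  obtain ⟨c, hc, hPc⟩ := exists_mulVec_eq_zero_iff.mpr ha
  obtain ⟨i, hi, him⟩ : ∃ i, c i ≠ 0 ∧ ∀ j, c j ≠ 0 → m j ≤ m i := by
    obtain ⟨i₀, hi₀⟩ := Function.ne_iff.mp hc
    obtain ⟨i, hi, him⟩ := Finset.exists_max_image {j | c j ≠ 0} m ⟨i₀, by simpa using hi₀⟩
    exact ⟨i, by simpa using hi, fun j hj => him j (by simpa using hj)⟩
  obtain ⟨Q₁, h₁⟩ := h.exists_mul_right (C := updateCol 1 i c)
    (by simpa [← cramer_apply] using hi) fun j k hjk => by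
    rcases eq_or_ne k i with rfl | hk
    · exact him j (by simpa using hjk)
    · obtain rfl : j = k := by simpa [hk, one_apply] using hjk
      exact le_rfl
  have hcol : (P a * updateCol 1 i c).col i = 0 := by
    rw [← hPc, ← mulVec_single_one, ← mulVec_mulVec, mulVec_single_one]
    congr
    ext
    simp
  obtain ⟨P', Q', h'⟩ := h₁.exists_update_sub_one hf hu hcol
  refine ⟨_, P', Q', h', Finset.sum_lt_sum (fun j _ => ?_) ⟨i, Finset.mem_univ i, by simp⟩⟩
  exact update_le_self_iff.mpr (sub_one_lt (m i)).le j

theorem exists_sum_lt_of_det_right_eq_zero (h : IsSectionFrame f m P Q)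
    (hf : DifferentiableOn ℂ f {0}ᶜ) (hu : ∀ z ≠ 0, IsUnit (f z)) {a : ℂ} (ha : (Q a).det = 0) :
    ∃ m' P' Q', IsSectionFrame f m' P' Q' ∧ ∑ j, m' j < ∑ j, m j := by
  have hinv : DifferentiableOn ℂ (fun u => (f u⁻¹)⁻¹) {0}ᶜ :=
    differentiableOn_matrix_inv (hf.comp differentiableOn_inv fun u hu₀ => inv_ne_zero hu₀)
      fun u hu₀ => hu u⁻¹ (inv_ne_zero hu₀)
  have hinvu (u : ℂ) (hu₀ : u ≠ 0) : IsUnit (f u⁻¹)⁻¹ :=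
    isUnit_nonsing_inv_iff.mpr (hu u⁻¹ (inv_ne_zero hu₀))
  obtain ⟨m', Q', P', h', hm'⟩ := (h.swap hu).exists_sum_lt_of_det_left_eq_zero hinv hinvu ha
  refine ⟨m', P', Q', { h'.swap hinvu with left_eq := fun z hz => ?_ }, hm'⟩
  have hfz : ((f z)⁻¹)⁻¹ = f z := nonsing_inv_nonsing_inv _ ((isUnit_iff_isUnit_det _).mp (hu z hz))
  simpa only [inv_inv, hfz] using (h'.swap hinvu).left_eq z hz

theorem sum_add_sum_nonneg {m' : ι → ℤ} {P' Q' : ℂ → Matrix ι ι ℂ} (h : IsSectionFrame f m P Q)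
    (h' : IsSectionFrame (fun z => (f z)⁻¹) m' P' Q') (hu : ∀ z ≠ 0, IsUnit (f z)) :
    0 ≤ ∑ j, m j + ∑ j, m' j := by
  by_contra! hneg
  let g (z : ℂ) := (P z).det * (P' z).det
  let b (z : ℂ) := (Q z⁻¹).det * (Q' z⁻¹).det
  have hg : Differentiable ℂ g :=
    (differentiable_det h.differentiable_left).mul (differentiable_det h'.differentiable_left)
  have hb : Tendsto b (Bornology.cobounded ℂ) (𝓝 ((Q 0).det * (Q' 0).det)) :=
    (((differentiable_det h.differentiable_right).mul
      (differentiable_det h'.differentiable_right)).continuous.tendsto 0).comp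
        tendsto_inv₀_cobounded
  have hfdet (z : ℂ) (hz : z ≠ 0) : (f z).det * ((f z)⁻¹).det = 1 := by
    rw [← det_mul, mul_nonsing_inv _ ((isUnit_iff_isUnit_det _).mp (hu z hz)), det_one]
  have hgb (z : ℂ) (hz : z ≠ 0) : g z = z ^ (∑ j, m j + ∑ j, m' j) * b z := by
    simp only [g, b]
    rw [h.det_left_eq hz, h'.det_left_eq hz, zpow_add₀ hz]
    linear_combination (Q z⁻¹).det * (Q' z⁻¹).det * z ^ (∑ j, m j) * z ^ (∑ j, m' j) * hfdet z hz
  have hg₁ : g 1 ≠ 0 := mul_ne_zero (h.swap hu).det_right_one_ne_zero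
    (h'.swap fun z hz => isUnit_nonsing_inv_iff.mpr (hu z hz)).det_right_one_ne_zero
  exact hg₁ (eq_zero_of_eq_zpow_smul hg hneg hb hgb 1)

end IsSectionFrame

theorem exists_isSectionFrame_isUnit {f : ℂ → Matrix ι ι ℂ} (hf : DifferentiableOn ℂ f {0}ᶜ)
    (hu : ∀ z ≠ 0, IsUnit (f z)) :
    ∃ m P Q, IsSectionFrame f m P Q ∧ (∀ z, IsUnit (P z)) ∧ ∀ u, IsUnit (Q u) := by
  obtain ⟨m₁, P₁, Q₁, h₁⟩ := exists_isSectionFrame (differentiableOn_matrix_inv hf hu)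
    fun z hz => isUnit_nonsing_inv_iff.mpr (hu z hz)
  obtain ⟨m₀, P₀, Q₀, h₀⟩ := exists_isSectionFrame hf hu
  obtain ⟨_, ⟨m, P, Q, h, rfl⟩, hmin⟩ := Int.exists_least_of_bdd
    (P := fun d => ∃ m P Q, IsSectionFrame f m P Q ∧ ∑ j, m j = d)
    ⟨-∑ j, m₁ j, by
      rintro _ ⟨m, P, Q, h, rfl⟩
      linarith [h.sum_add_sum_nonneg h₁ hu]⟩
    ⟨_, m₀, P₀, Q₀, h₀, rfl⟩
  refine ⟨m, P, Q, h, fun z => ?_, fun u => ?_⟩ <;>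
    refine (isUnit_iff_isUnit_det _).mpr (isUnit_iff_ne_zero.mpr fun hdet => ?_)
  · obtain ⟨m', P', Q', h', hlt⟩ := h.exists_sum_lt_of_det_left_eq_zero hf hu hdet
    exact hlt.not_ge (hmin _ ⟨m', P', Q', h', rfl⟩)
  · obtain ⟨m', P', Q', h', hlt⟩ := h.exists_sum_lt_of_det_right_eq_zero hf hu hdet
    exact hlt.not_ge (hmin _ ⟨m', P', Q', h', rfl⟩)

end SectionFrame

section PartialIndices

open Matrix Topology

attribute [local instance] Matrix.linftyOpNormedRing Matrix.linftyOpNormedAlgebra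

theorem det_eq_zero_of_zero_block {ι R : Type*} [Fintype ι] [DecidableEq ι] [CommRing R]
    {M : Matrix ι ι R} {s t : Finset ι} (hst : Fintype.card ι < s.card + t.card)
    (hM : ∀ i ∈ s, ∀ j ∈ t, M i j = 0) : M.det = 0 := by
  rw [det_apply]
  refine Finset.sum_eq_zero fun σ _ => ?_
  obtain ⟨i, hi⟩ : (s ∩ t.map σ.toEmbedding).Nonempty := by
    refine Finset.inter_nonempty_of_card_lt_card_add_card (Finset.subset_univ _)
      (Finset.subset_univ _) ?_
    rwa [Finset.card_map]
  rw [Finset.mem_inter, Finset.mem_map] at hi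
  obtain ⟨his, j, hj, rfl⟩ := hi
  have hprod : ∏ j, M (σ j) j = 0 := Finset.prod_eq_zero (Finset.mem_univ j) (hM _ his j hj)
  rw [hprod, smul_zero]

variable {n : ℕ} {f : ℂ → Matrix (Fin n) (Fin n) ℂ} {κ κ' : Fin n → ℤ}

theorem IsSectionFrame.entireBirkhoffFactorization {m : Fin n → ℤ}
    {P Q : ℂ → Matrix (Fin n) (Fin n) ℂ} (h : IsSectionFrame f m P Q)
    (hP : ∀ z, IsUnit (P z)) (hQ : ∀ u, IsUnit (Q u)) :
    EntireBirkhoffFactorization n f (-m) := by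
  have hQinv : Differentiable ℂ fun u => (Q u)⁻¹ := differentiableOn_univ.mp
    (differentiableOn_matrix_inv h.differentiable_right.differentiableOn fun u _ => hQ u)
  refine ⟨P, fun z => (Q z⁻¹)⁻¹, (Q 0)⁻¹, differentiable_matrix_iff.mp h.differentiable_left, hP,
    differentiableOn_matrix_iff.mp (hQinv.comp_differentiableOn differentiableOn_inv),
    fun z _ => isUnit_nonsing_inv_iff.mpr (hQ z⁻¹), isUnit_nonsing_inv_iff.mpr (hQ 0),
    fun i j => ?_, fun z hz => ?_⟩
  · rw [comap_norm_atTop]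
    exact ((differentiable_matrix_iff.mp hQinv i j).continuous.tendsto 0).comp
      tendsto_inv₀_cobounded
  · rw [h.left_eq z hz, mul_assoc _ (diagonal fun j => z ^ m j), diagonal_mul_diagonal]
    simp [zpow_ne_zero _ hz, mul_assoc, mul_nonsing_inv _ ((isUnit_iff_isUnit_det _).mp (hQ z⁻¹))]

namespace EntireBirkhoffFactorization

theorem comp_perm (h : EntireBirkhoffFactorization n f κ) (σ : Equiv.Perm (Fin n)) :
    EntireBirkhoffFactorization n f (κ ∘ σ) := by
  obtain ⟨Fp, Fm, L, hFp, hFpu, hFm, hFmu, hL, hlim, hf⟩ := h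
  refine ⟨fun z => (Fp z).submatrix id σ, fun z => (Fm z).submatrix σ id, L.submatrix σ id,
    fun i j => hFp i (σ j), fun z => ?_, fun i j => hFm (σ i) j, fun z hz => ?_, ?_,
    fun i j => hlim (σ i) j, fun z hz => ?_⟩
  · exact (isUnit_submatrix_equiv (Equiv.refl _) σ).mpr (hFpu z)
  · exact (isUnit_submatrix_equiv σ (Equiv.refl _)).mpr (hFmu z hz)
  · exact (isUnit_submatrix_equiv σ (Equiv.refl _)).mpr hL
  · have hdiag : diagonal (fun i => z ^ (κ ∘ σ) i) =
        (diagonal fun i => z ^ κ i).submatrix σ σ := by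
      simp [Function.comp_def]
    rw [hdiag, submatrix_mul_equiv, submatrix_mul_equiv, submatrix_id_id, hf z hz]

theorem exists_antitone (h : EntireBirkhoffFactorization n f κ) :
    ∃ κ', Antitone κ' ∧ EntireBirkhoffFactorization n f κ' :=
  ⟨_, Tuple.monotone_sort (OrderDual.toDual ∘ κ), h.comp_perm _⟩

theorem exists_transition (h : EntireBirkhoffFactorization n f κ)
    (h' : EntireBirkhoffFactorization n f κ') :
    ∃ (T B : ℂ → Matrix (Fin n) (Fin n) ℂ) (L : Matrix (Fin n) (Fin n) ℂ),
      Differentiable ℂ T ∧ (∀ z, IsUnit (T z)) ∧ Tendsto B (Bornology.cobounded ℂ) (𝓝 L) ∧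
      ∀ z ≠ 0, (T z * diagonal fun i => z ^ κ i) = (diagonal fun i => z ^ κ' i) * B z := by
  obtain ⟨Fp, Fm, L, hFp, hFpu, -, hFmu, hL, hFlim, hF⟩ := h
  obtain ⟨Gp, Gm, L', hGp, hGpu, -, hGmu, hL', hGlim, hG⟩ := h'
  rw [comap_norm_atTop] at hFlim hGlim
  have hGinv : Differentiable ℂ fun z => (Gp z)⁻¹ := differentiableOn_univ.mp
    (differentiableOn_matrix_inv (differentiable_matrix_iff.mpr hGp).differentiableOn
      fun z _ => hGpu z)
  have hFinv : Tendsto (fun z => (Fm z)⁻¹) (Bornology.cobounded ℂ) (𝓝 L⁻¹) := by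
    simp only [nonsing_inv_eq_ringInverse]
    obtain ⟨l, rfl⟩ := hL
    exact (NormedRing.inverse_continuousAt l).tendsto.comp
      (tendsto_pi_nhds.mpr fun i => tendsto_pi_nhds.mpr (hFlim i))
  refine ⟨fun z => (Gp z)⁻¹ * Fp z, fun z => Gm z * (Fm z)⁻¹, L' * L⁻¹,
    hGinv.mul (differentiable_matrix_iff.mpr hFp),
    fun z => (isUnit_nonsing_inv_iff.mpr (hGpu z)).mul (hFpu z),
    .mul (tendsto_pi_nhds.mpr fun i => tendsto_pi_nhds.mpr (hGlim i)) hFinv, fun z hz => ?_⟩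
  have hFG := (hF z hz).symm.trans (hG z hz)
  have hGp_det := (isUnit_iff_isUnit_det _).mp (hGpu z)
  have hFm_det := (isUnit_iff_isUnit_det _).mp (hFmu z hz)
  calc (Gp z)⁻¹ * Fp z * diagonal (fun i => z ^ κ i)
      = (Gp z)⁻¹ * (Fp z * diagonal (fun i => z ^ κ i) * Fm z) * (Fm z)⁻¹ := by
        rw [mul_assoc, mul_assoc (Gp z)⁻¹, mul_nonsing_inv_cancel_right _ _ hFm_det]
    _ = diagonal (fun i => z ^ κ' i) * (Gm z * (Fm z)⁻¹) := by
        rw [hFG, mul_assoc (Gp z), nonsing_inv_mul_cancel_left _ _ hGp_det, mul_assoc]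

/-- If `κ' r < κ r`, then by Liouville the transition matrix has a zero block on rows `≥ r` and
columns `≤ r`, which is too large for an invertible matrix. -/
theorem le_of_antitone (h : EntireBirkhoffFactorization n f κ)
    (h' : EntireBirkhoffFactorization n f κ') (hκ : Antitone κ) (hκ' : Antitone κ') :
    κ ≤ κ' := by
  obtain ⟨T, B, L, hT, hTu, hB, hTB⟩ := h.exists_transition h'
  intro r
  by_contra! hr
  have hblock (i : Fin n) (hi : r ≤ i) (j : Fin n) (hj : j ≤ r) : T 1 i j = 0 := by
    have hneg : κ' i - κ j < 0 := by linarith [hκ' hi, hκ hj]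
    refine eq_zero_of_eq_zpow_smul (differentiable_matrix_iff.mp hT i j) hneg
      (tendsto_pi_nhds.mp (tendsto_pi_nhds.mp hB i) j) (fun z hz => ?_) 1
    have hij : T z i j * z ^ κ j = z ^ κ' i * B z i j := by
      simpa only [mul_diagonal, diagonal_mul] using congrFun₂ (hTB z hz) i j
    rw [smul_eq_mul, zpow_sub₀ hz, div_mul_eq_mul_div, eq_div_iff (zpow_ne_zero _ hz), hij]
  refine ((isUnit_iff_isUnit_det _).mp (hTu 1)).ne_zero (det_eq_zero_of_zero_block
    (s := Finset.Ici r) (t := Finset.Iic r) ?_ (by simpa using hblock))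
  simp only [Fintype.card_fin, Fin.card_Ici, Fin.card_Iic]
  lia

end EntireBirkhoffFactorization

end PartialIndices

/-- Every holomorphic map `f : ℂ× → GL_n(ℂ)` admits a Birkhoff decomposition
`f = F₊ · diag(z^{κ₁},…,z^{κ_n}) · F₋` on `ℂ×` with decreasing integer partial indices
`κ₁ ≥ ⋯ ≥ κ_n`, an entire `GL_n`-valued factor `F₊` and a factor `F₋` holomorphic and
`GL_n`-valued on `ℂ×` with an invertible limit at `∞`; the partial indices are uniquely
determined by `f`. -/
theorem stmt_6 (n : ℕ) (f : ℂ → Matrix (Fin n) (Fin n) ℂ)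
    (hfd : ∀ i j, DifferentiableOn ℂ (fun z => f z i j) {z : ℂ | z ≠ 0})
    (hfu : ∀ z : ℂ, z ≠ 0 → IsUnit (f z)) :
    ∃ κ : Fin n → ℤ, Antitone κ ∧
      EntireBirkhoffFactorization n f κ ∧
      ∀ κ' : Fin n → ℤ, Antitone κ' → EntireBirkhoffFactorization n f κ' → κ' = κ := by
  have hf : DifferentiableOn ℂ f {0}ᶜ := differentiableOn_matrix_iff.mpr hfd
  obtain ⟨m, P, Q, h, hP, hQ⟩ := exists_isSectionFrame_isUnit hf hfu
  obtain ⟨κ, hκ, hfac⟩ := (h.entireBirkhoffFactorization hP hQ).exists_antitone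
  exact ⟨κ, hκ, hfac, fun κ' hκ' hfac' =>
    le_antisymm (hfac'.le_of_antitone hfac hκ' hκ) (hfac.le_of_antitone hfac' hκ hκ')⟩
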